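/- Let (α,c) be admissible. Then there exist a constant η with 0 < η < min{α, η₀}, a constant C > 0, and two linearly independent solutions φ_{α,+}, φ_{α,−} of the homogeneous Rayleigh equation Ray_α(φ) = 0 on [0,∞) of the form φ_{α,±}(z) = e^{±αz}(1 + ψ_{α,±}(z)), where ψ_{α,±} ∈ X^η and ‖ψ_{α,±}‖_η ≤ C. -/

import Mathlib

open Real Complex Filter Set MeasureTheory

noncomputable section

/-- A boundary layer profile: smooth, `U 0 = 0`, with all derivatives of `U - U₊`
decaying exponentially at rate `eta0`. -/
structure BLProfile where
  U : ℝ → ℝ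
  smooth : ContDiff ℝ (⊤ : ℕ∞) U
  zeroAtZero : U 0 = 0
  Uplus : ℝ
  eta0 : ℝ
  eta0_pos : 0 < eta0
  decay : ∀ k : ℕ, ∃ C > 0, ∀ z ≥ (0 : ℝ),
    |iteratedDeriv k (fun y => U y - Uplus) z| ≤ C * Real.exp (-eta0 * z)

/-- `Δ_α φ = φ'' - α² φ`. -/
def lapA (α : ℝ) (φ : ℝ → ℂ) : ℝ → ℂ :=
  fun z => deriv (deriv φ) z - (α : ℂ) ^ 2 * φ z

namespace BLProfile

variable (P : BLProfile)

/-- `U''`. -/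
def ddU : ℝ → ℝ := fun z => deriv (deriv P.U) z

/-- The Rayleigh operator `Ray_α(φ) = (U - c) Δ_α φ - U'' φ`. -/
def Ray (α : ℝ) (c : ℂ) (φ : ℝ → ℂ) : ℝ → ℂ :=
  fun z => ((P.U z : ℂ) - c) * lapA α φ z - (P.ddU z : ℂ) * φ z

/-- The Orr–Sommerfeld operator `OS(φ) = (U - c) Δ_α φ - U'' φ - ε Δ_α² φ`. -/
def OS (α : ℝ) (c ε : ℂ) (φ : ℝ → ℂ) : ℝ → ℂ :=
  fun z => P.Ray α c φ z - ε * lapA α (lapA α φ) z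

/-- The distance `d_c` from `c` to the range of `U` over `[0, ∞)`. -/
def dc (c : ℂ) : ℝ := Metric.infDist c ((fun z => (P.U z : ℂ)) '' Set.Ici 0)

/-- Admissibility of the pair `(α, c)`: `d_c ≥ ε₀ / (1 + α)`. -/
def Admissible (ε₀ α : ℝ) (c : ℂ) : Prop := ε₀ / (1 + α) ≤ P.dc c

/-- The fast rate `μ_f(z) = (α² + (U(z) - c)/ε)^{1/2}` (principal square root). -/
def muF (α : ℝ) (c ε : ℂ) : ℝ → ℂ :=
  fun z => ((α : ℂ) ^ 2 + ((P.U z : ℂ) - c) / ε) ^ (1 / 2 : ℂ)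

/-- `m_f = inf_{z ≥ 0} Re μ_f(z)`. -/
def mF (α : ℝ) (c ε : ℂ) : ℝ := ⨅ z : Set.Ici (0 : ℝ), (P.muF α c ε z.1).re

/-- `M_f = sup_{z ≥ 0} Re μ_f(z)`. -/
def MF (α : ℝ) (c ε : ℂ) : ℝ := ⨆ z : Set.Ici (0 : ℝ), (P.muF α c ε z.1).re

end BLProfile

/-- `ε = ν / (iα)`. -/
def epsOf (α ν : ℝ) : ℂ := (ν : ℂ) / (Complex.I * (α : ℂ))

/-- The weighted sup-norm `‖ω‖_η = sup_{z ≥ 0} |ω(z)| e^{ηz}`. -/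
def wnorm (η : ℝ) (ω : ℝ → ℂ) : ℝ :=
  sSup ((fun z => ‖ω z‖ * Real.exp (η * z)) '' Set.Ici 0)

/-- Membership in the weighted space `X^η` (finiteness of the weighted norm). -/
def memX (η : ℝ) (ω : ℝ → ℂ) : Prop :=
  ∃ C, ∀ z ≥ (0 : ℝ), ‖ω z‖ * Real.exp (η * z) ≤ C

/-!
Write `φ = e^{σz} v` with `σ = ±α`. Rayleigh's equation becomes `v'' + 2σv' = Vv` with the
exponentially decaying potential `V = U''/(U - c)`, and one needs for each sign a solution `v` with
`v → 1` exponentially fast as `z → ∞`.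

Only the tail of `V` matters: a solution on `[M, ∞)` extends by linear ODE theory. For `M` large,
the even function `W(s) = V(M + |s|)` has `∫ |W| < α`, so the integral equation
`u(z) = 1 - (1/2α) ∫ min(1, e^{-2α(z-s)}) W(s) u(s) ds` on all of `ℝ` is solved by a Neumann series.
Its solution satisfies `u'' + 2αu' = Wu`, tends to `1` at `+∞`, and tends at `-∞` to some `l` with
`|l - 1| < 1`. Thus `u(z)` is the tail for `σ = α`, and, since `W` is even, the reflection `u(-z)/l`
is the tail for `σ = -α`.
-/

open scoped BoundedContinuousFunction

theorem exists_eq_add_apply_of_norm_lt_one {𝕜 E : Type*} [NontriviallyNormedField 𝕜]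
    [NormedAddCommGroup E] [NormedSpace 𝕜 E] [CompleteSpace E] (T : E →L[𝕜] E) (hT : ‖T‖ < 1)
    (g : E) : ∃ u, u = g + T u := by
  obtain ⟨S, hS⟩ := (isUnit_one_sub_of_norm_lt_one hT).exists_right_inv
  refine ⟨S g, ?_⟩
  have h : S g - T (S g) = g := by simpa using congrArg (fun R : E →L[𝕜] E => R g) hS
  exact sub_eq_iff_eq_add.1 h

section LinearODE

variable {E : Type*} [NormedAddCommGroup E] [NormedSpace ℝ E]

/-- The Bielecki weight attached to a rate `b`: in the supremum norm weighted by its inverse, the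
Picard operator of a linear equation whose coefficient has norm `b` is a contraction. -/
def bieleckiWeight (b : ℝ → ℝ) (t₀ t : ℝ) : ℝ := Real.exp (2 * |∫ s in t₀..t, b s|)

theorem bieleckiWeight_pos (b : ℝ → ℝ) (t₀ t : ℝ) : 0 < bieleckiWeight b t₀ t :=
  Real.exp_pos _

theorem one_le_bieleckiWeight (b : ℝ → ℝ) (t₀ t : ℝ) : 1 ≤ bieleckiWeight b t₀ t :=
  Real.one_le_exp (by positivity)

theorem continuous_bieleckiWeight {b : ℝ → ℝ} (hb : Continuous b) (t₀ : ℝ) :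
    Continuous (bieleckiWeight b t₀) := by
  have hprim : Continuous fun t => ∫ s in t₀..t, b s :=
    intervalIntegral.continuous_primitive hb.intervalIntegrable t₀
  exact Real.continuous_exp.comp (hprim.abs.const_mul 2)

theorem abs_integral_exp_two_mul_abs_le (x : ℝ) :
    |∫ r in (0 : ℝ)..x, Real.exp (2 * |r|)| ≤ Real.exp (2 * |x|) / 2 := by
  wlog hx : 0 ≤ x generalizing x
  · have h := intervalIntegral.integral_comp_neg (a := 0) (b := x) fun r => Real.exp (2 * |r|)
    simp only [abs_neg, neg_zero] at h
    rw [h, intervalIntegral.integral_symm, abs_neg, ← abs_neg x]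
    exact this (-x) (by linarith)
  have h : ∫ r in (0 : ℝ)..x, Real.exp (2 * |r|) = (Real.exp (2 * x) - 1) / 2 := by
    rw [intervalIntegral.integral_congr (g := fun r => Real.exp (2 * r))]
    · simp [intervalIntegral.integral_comp_mul_left]
      ring
    · intro r hr
      rw [uIcc_of_le hx] at hr
      simp [abs_of_nonneg hr.1]
  rw [h, abs_of_nonneg hx, abs_of_nonneg (by linarith [Real.one_le_exp (x := 2 * x) (by linarith)])]
  linarith

theorem abs_integral_mul_bieleckiWeight_le {b : ℝ → ℝ} (hb : Continuous b) (t₀ t : ℝ) :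
    |∫ s in t₀..t, bieleckiWeight b t₀ s * b s| ≤ bieleckiWeight b t₀ t / 2 := by
  have hsubst := intervalIntegral.integral_comp_mul_deriv (a := t₀) (b := t)
    (f := fun s => ∫ r in t₀..s, b r) (f' := b) (g := fun r => Real.exp (2 * |r|))
    (fun s _ => (hb.integral_hasStrictDerivAt t₀ s).hasDerivAt) hb.continuousOn (by fun_prop)
  simp only [Function.comp_def, intervalIntegral.integral_same] at hsubst
  simp only [bieleckiWeight, hsubst]
  exact abs_integral_exp_two_mul_abs_le _

/-- The Picard operator `x ↦ ∫_{t₀}^t A(s) x(s) ds`, conjugated by the Bielecki weight so that it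
acts on bounded functions. -/
def picardFun (A : ℝ → E →L[ℝ] E) (t₀ : ℝ) (Y : ℝ → E) (t : ℝ) : E :=
  (bieleckiWeight (‖A ·‖) t₀ t)⁻¹ • ∫ s in t₀..t, bieleckiWeight (‖A ·‖) t₀ s • A s (Y s)

theorem continuous_bieleckiWeight_smul {A : ℝ → E →L[ℝ] E} (hA : Continuous A) (t₀ : ℝ)
    (Y : ℝ →ᵇ E) : Continuous fun s => bieleckiWeight (‖A ·‖) t₀ s • A s (Y s) :=
  (continuous_bieleckiWeight hA.norm t₀).smul (hA.clm_apply Y.continuous)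

theorem continuous_picardFun {A : ℝ → E →L[ℝ] E} (hA : Continuous A) (t₀ : ℝ) (Y : ℝ →ᵇ E) :
    Continuous (picardFun A t₀ Y) := by
  have hint := (continuous_bieleckiWeight_smul hA t₀ Y).intervalIntegrable (μ := volume)
  exact ((continuous_bieleckiWeight hA.norm t₀).inv₀ fun t => (bieleckiWeight_pos _ t₀ t).ne').smul
    (intervalIntegral.continuous_primitive hint t₀)

theorem norm_picardFun_le {A : ℝ → E →L[ℝ] E} (hA : Continuous A) (t₀ : ℝ) (Y : ℝ →ᵇ E) (t : ℝ) :
    ‖picardFun A t₀ Y t‖ ≤ 2⁻¹ * ‖Y‖ := by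
  set w := bieleckiWeight (‖A ·‖) t₀
  have hw : 0 < w t := bieleckiWeight_pos _ t₀ t
  have hwc : Continuous w := continuous_bieleckiWeight hA.norm t₀
  have hint : ‖∫ s in t₀..t, w s • A s (Y s)‖ ≤ w t / 2 * ‖Y‖ :=
    calc ‖∫ s in t₀..t, w s • A s (Y s)‖
        ≤ |∫ s in t₀..t, w s * ‖A s‖ * ‖Y‖| := by
          refine intervalIntegral.norm_integral_le_abs_of_norm_le (Eventually.of_forall fun s => ?_)
            (Continuous.intervalIntegrable (by fun_prop) _ _)
          rw [norm_smul, Real.norm_of_nonneg (bieleckiWeight_pos _ t₀ s).le, mul_assoc]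
          gcongr
          · exact (bieleckiWeight_pos _ t₀ s).le
          · exact (A s).le_opNorm_of_le (Y.norm_coe_le_norm s)
      _ = |∫ s in t₀..t, w s * ‖A s‖| * ‖Y‖ := by
          rw [intervalIntegral.integral_mul_const, abs_mul, abs_norm]
      _ ≤ w t / 2 * ‖Y‖ := by
          gcongr
          exact abs_integral_mul_bieleckiWeight_le hA.norm t₀ t
  rw [picardFun, norm_smul, norm_inv, Real.norm_of_nonneg hw.le, inv_mul_le_iff₀ hw]
  exact hint.trans_eq (by ring)

/-- `picardFun` as a contraction of the space of bounded continuous functions. -/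
def picardOperator (A : ℝ → E →L[ℝ] E) (hA : Continuous A) (t₀ : ℝ) :
    (ℝ →ᵇ E) →L[ℝ] (ℝ →ᵇ E) :=
  LinearMap.mkContinuous
    { toFun := fun Y => BoundedContinuousFunction.ofNormedAddCommGroup (picardFun A t₀ Y)
        (continuous_picardFun hA t₀ Y) _ (norm_picardFun_le hA t₀ Y)
      map_add' := fun Y Z => by
        ext t
        have hY := (continuous_bieleckiWeight_smul hA t₀ Y).intervalIntegrable (μ := volume) t₀ t
        have hZ := (continuous_bieleckiWeight_smul hA t₀ Z).intervalIntegrable (μ := volume) t₀ t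
        simp [picardFun, ← smul_add, ← intervalIntegral.integral_add hY hZ]
      map_smul' := fun r Y => by
        ext t
        simp [picardFun, smul_comm _ r, intervalIntegral.integral_smul] }
    2⁻¹ fun Y => BoundedContinuousFunction.norm_ofNormedAddCommGroup_le _ (by positivity)
      (norm_picardFun_le hA t₀ Y)

theorem norm_picardOperator_le {A : ℝ → E →L[ℝ] E} (hA : Continuous A) (t₀ : ℝ) :
    ‖picardOperator A hA t₀‖ ≤ 2⁻¹ :=
  LinearMap.mkContinuous_norm_le _ (by positivity) _

theorem isIntegralCurve_of_eq_add_integral [CompleteSpace E] {A : ℝ → E →L[ℝ] E}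
    (hA : Continuous A) {t₀ : ℝ} {x₀ : E} {x : ℝ → E} (hxc : Continuous x)
    (hx : ∀ t, x t = x₀ + ∫ s in t₀..t, A s (x s)) : IsIntegralCurve x fun t => A t := by
  intro t
  have h := ((hA.clm_apply hxc).integral_hasStrictDerivAt t₀ t).hasDerivAt.const_add x₀
  exact h.congr_of_eventuallyEq (Eventually.of_forall hx)

theorem exists_isIntegralCurve_of_continuous [CompleteSpace E] {A : ℝ → E →L[ℝ] E}
    (hA : Continuous A) (t₀ : ℝ) (x₀ : E) :
    ∃ x, x t₀ = x₀ ∧ IsIntegralCurve x fun t => A t := by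
  set w := bieleckiWeight (‖A ·‖) t₀
  have hw : ∀ t, w t ≠ 0 := fun t => (bieleckiWeight_pos _ t₀ t).ne'
  have hwc : Continuous w := continuous_bieleckiWeight hA.norm t₀
  let g : ℝ →ᵇ E := BoundedContinuousFunction.ofNormedAddCommGroup (fun t => (w t)⁻¹ • x₀)
    ((hwc.inv₀ hw).smul continuous_const) ‖x₀‖ fun t => by
      rw [norm_smul, norm_inv, Real.norm_of_nonneg (bieleckiWeight_pos _ t₀ t).le]
      exact mul_le_of_le_one_left (norm_nonneg x₀)
        (inv_le_one_of_one_le₀ (one_le_bieleckiWeight _ t₀ t))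
  obtain ⟨Y, hY⟩ := exists_eq_add_apply_of_norm_lt_one (picardOperator A hA t₀)
    ((norm_picardOperator_le hA t₀).trans_lt (by norm_num)) g
  have hx : ∀ t, w t • Y t = x₀ + ∫ s in t₀..t, A s (w s • Y s) := by
    intro t
    have hYt : Y t = (w t)⁻¹ • x₀ + (w t)⁻¹ • ∫ s in t₀..t, w s • A s (Y s) :=
      congrArg (fun Z : ℝ →ᵇ E => Z t) hY
    simp_rw [map_smul]
    rw [hYt, ← smul_add, smul_inv_smul₀ (hw t)]
  refine ⟨fun t => w t • Y t, by simp [hx t₀], ?_⟩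
  exact isIntegralCurve_of_eq_add_integral hA (hwc.smul Y.continuous) hx

theorem eqOn_Ici_of_hasDerivAt_clm {A : ℝ → E →L[ℝ] E} (hA : Continuous A) {t₀ : ℝ} {x y : ℝ → E}
    (hx : ∀ t ≥ t₀, HasDerivAt x (A t (x t)) t) (hy : ∀ t ≥ t₀, HasDerivAt y (A t (y t)) t)
    (h₀ : x t₀ = y t₀) : EqOn x y (Ici t₀) := by
  intro t ht
  obtain ⟨K, hK⟩ := isCompact_Icc.exists_bound_of_continuousOn (s := Icc t₀ t) hA.continuousOn
  have hd : ∀ s ≥ t₀, HasDerivAt (x - y) (A s ((x - y) s)) s := fun s hs =>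
    ((hx s hs).sub (hy s hs)).congr_deriv (by simp)
  refine sub_eq_zero.1 (eq_zero_of_abs_deriv_le_mul_abs_self_of_eq_zero_right (K := K)
    (f := x - y) (fun s hs => (hd s hs.1).continuousAt.continuousWithinAt)
    (fun s hs => (hd s hs.1).hasDerivWithinAt) (sub_eq_zero.2 h₀) (fun s hs => ?_) t
    (right_mem_Icc.2 ht))
  exact (A s).le_of_opNorm_le (hK s (Ico_subset_Icc_self hs)) _

theorem exists_isIntegralCurve_extension [CompleteSpace E] {A : ℝ → E →L[ℝ] E}
    (hA : Continuous A) {t₀ : ℝ} {y : ℝ → E} (hy : ∀ t ≥ t₀, HasDerivAt y (A t (y t)) t) :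
    ∃ x, IsIntegralCurve x (fun t => A t) ∧ EqOn x y (Ici t₀) := by
  obtain ⟨x, hx₀, hx⟩ := exists_isIntegralCurve_of_continuous hA t₀ (y t₀)
  exact ⟨x, hx, eqOn_Ici_of_hasDerivAt_clm hA (fun t _ => hx t) hy hx₀⟩

end LinearODE

section Jost

variable {α η : ℝ} {V : ℝ → ℂ}

/-- The first-order system for `(v, v')` equivalent to `v'' + 2σv' = Vv`, the equation satisfied by
`v` exactly when `e^{σz} v(z)` solves `φ'' = (σ² + V)φ`. -/
def jostGenerator (σ : ℝ) (V : ℝ → ℂ) (t : ℝ) : ℂ × ℂ →L[ℝ] ℂ × ℂ :=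
  (ContinuousLinearMap.snd ℝ ℂ ℂ).prod
    (V t • ContinuousLinearMap.fst ℝ ℂ ℂ - (2 * σ) • ContinuousLinearMap.snd ℝ ℂ ℂ)

@[simp]
theorem jostGenerator_apply (σ : ℝ) (V : ℝ → ℂ) (t : ℝ) (x : ℂ × ℂ) :
    jostGenerator σ V t x = (x.2, V t * x.1 - 2 * σ * x.2) := by
  simp [jostGenerator]

theorem continuous_jostGenerator (σ : ℝ) (hV : Continuous V) :
    Continuous (jostGenerator σ V) := by
  have h : Continuous fun t => V t • ContinuousLinearMap.fst ℝ ℂ ℂ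
      - (2 * σ) • ContinuousLinearMap.snd ℝ ℂ ℂ := by fun_prop
  exact (ContinuousLinearMap.prodₗᵢ ℝ).continuous.comp (continuous_const.prodMk h)

theorem isIntegralCurve_jostGenerator_iff {σ : ℝ} {x : ℝ → ℂ × ℂ} :
    IsIntegralCurve x (fun t => jostGenerator σ V t) ↔
      (∀ z, HasDerivAt (fun t => (x t).1) (x z).2 z) ∧
        ∀ z, HasDerivAt (fun t => (x t).2) (V z * (x z).1 - 2 * σ * (x z).2) z := by
  simp only [IsIntegralCurve, jostGenerator_apply, ← forall_and]
  refine forall_congr' fun z => ⟨fun h => ⟨?_, ?_⟩, fun h => h.1.prodMk h.2⟩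
  · exact hasFDerivAt_fst.comp_hasDerivAt z h
  · exact hasFDerivAt_snd.comp_hasDerivAt z h

/-- The kernel `min 1 e^{-2αx}` of the integral equation for the Jost function. -/
def jostKernel (α x : ℝ) : ℝ := Real.exp (-(2 * α) * max x 0)

theorem jostKernel_pos (α x : ℝ) : 0 < jostKernel α x := Real.exp_pos _

theorem jostKernel_le_one (hα : 0 ≤ α) (x : ℝ) : jostKernel α x ≤ 1 :=
  Real.exp_le_one_iff.2 (by have := le_max_right x 0; nlinarith)

theorem norm_jostKernel_le_one (hα : 0 ≤ α) (x : ℝ) : ‖jostKernel α x‖ ≤ 1 := by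
  rw [Real.norm_of_nonneg (jostKernel_pos α x).le]
  exact jostKernel_le_one hα x

theorem continuous_jostKernel (α : ℝ) : Continuous (jostKernel α) := by
  unfold jostKernel
  fun_prop

theorem jostKernel_le_exp (hη : 0 ≤ η) (hηα : η ≤ 2 * α) (x : ℝ) :
    jostKernel α x ≤ Real.exp (-η * x) := by
  refine Real.exp_le_exp.2 ?_
  nlinarith [le_max_left x 0, le_max_right x 0]

theorem one_sub_jostKernel_le_exp (hη : 0 ≤ η) (x : ℝ) :
    1 - jostKernel α x ≤ Real.exp (η * x) := by
  rcases le_or_gt x 0 with hx | hx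
  · simp [jostKernel, hx, (Real.exp_pos _).le]
  · have := Real.one_le_exp (mul_nonneg hη hx.le)
    linarith [jostKernel_pos α x]

theorem integrable_jostKernel_smul (hα : 0 ≤ α) {q : ℝ → ℂ} (hq : Integrable q) (z : ℝ) :
    Integrable fun s => jostKernel α (z - s) • q s :=
  hq.bdd_smul 1 ((continuous_jostKernel α).comp (by fun_prop)).aestronglyMeasurable
    (Eventually.of_forall fun s => norm_jostKernel_le_one hα _)

theorem continuous_integral_jostKernel (hα : 0 ≤ α) {q : ℝ → ℂ} (hq : Integrable q) :
    Continuous fun z => ∫ s, jostKernel α (z - s) • q s := by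
  refine continuous_of_dominated (bound := fun s => ‖q s‖)
    (fun z => (integrable_jostKernel_smul hα hq z).aestronglyMeasurable) (fun z => ?_) hq.norm ?_
  · refine Eventually.of_forall fun s => ?_
    rw [norm_smul]
    exact mul_le_of_le_one_left (norm_nonneg _) (norm_jostKernel_le_one hα _)
  · refine Eventually.of_forall fun s => ?_
    have := continuous_jostKernel α
    fun_prop

theorem integrable_mul_boundedContinuous (hV : Integrable V) (u : ℝ →ᵇ ℂ) :
    Integrable fun s => V s * u s :=
  hV.mul_bdd u.continuous.aestronglyMeasurable (Eventually.of_forall u.norm_coe_le_norm)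

theorem norm_integral_mul_boundedContinuous_le {κ : ℝ → ℝ} (hκ : ∀ s, ‖κ s‖ ≤ 1)
    (hV : Integrable V) (u : ℝ →ᵇ ℂ) : ‖∫ s, κ s • (V s * u s)‖ ≤ (∫ s, ‖V s‖) * ‖u‖ := by
  rw [← integral_mul_const]
  refine norm_integral_le_of_norm_le (hV.norm.mul_const _) (Eventually.of_forall fun s => ?_)
  rw [norm_smul, norm_mul]
  calc ‖κ s‖ * (‖V s‖ * ‖u s‖) ≤ 1 * (‖V s‖ * ‖u‖) := by
        gcongr
        · exact hκ s
        · exact u.norm_coe_le_norm s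
    _ = ‖V s‖ * ‖u‖ := one_mul _

/-- The operator `u ↦ ∫ k(· - s) V(s) u(s) ds` on bounded functions, with `k` the Jost kernel. -/
def jostOperator (hα : 0 ≤ α) (hV : Integrable V) : (ℝ →ᵇ ℂ) →L[ℂ] (ℝ →ᵇ ℂ) :=
  LinearMap.mkContinuous
    { toFun := fun u => BoundedContinuousFunction.ofNormedAddCommGroup
        (fun z => ∫ s, jostKernel α (z - s) • (V s * u s))
        (continuous_integral_jostKernel hα (integrable_mul_boundedContinuous hV u)) _
        fun z => norm_integral_mul_boundedContinuous_le
          (fun s => norm_jostKernel_le_one hα (z - s)) hV u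
      map_add' := fun u v => by
        ext z
        have hint := fun w : ℝ →ᵇ ℂ =>
          integrable_jostKernel_smul hα (integrable_mul_boundedContinuous hV w) z
        have h := integral_add (hint u) (hint v)
        simpa [← smul_add, ← mul_add] using h
      map_smul' := fun r u => by
        ext z
        have h := integral_const_mul (μ := volume) r
          fun s => jostKernel α (z - s) • (V s * u s)
        simpa [mul_left_comm] using h }
    (∫ s, ‖V s‖) fun u => BoundedContinuousFunction.norm_ofNormedAddCommGroup_le _
      (by positivity) fun z => norm_integral_mul_boundedContinuous_le
        (fun s => norm_jostKernel_le_one hα (z - s)) hV u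

theorem jostOperator_apply (hα : 0 ≤ α) (hV : Integrable V) (u : ℝ →ᵇ ℂ) (z : ℝ) :
    jostOperator hα hV u z = ∫ s, jostKernel α (z - s) • (V s * u s) := rfl

theorem norm_jostOperator_le (hα : 0 ≤ α) (hV : Integrable V) :
    ‖jostOperator hα hV‖ ≤ ∫ s, ‖V s‖ :=
  LinearMap.mkContinuous_norm_le _ (by positivity) _

theorem exists_eq_one_sub_integral_jostKernel (hα : 0 < α) (hV : Integrable V)
    (hVα : ∫ s, ‖V s‖ < α) :
    ∃ u : ℝ →ᵇ ℂ, ‖u‖ ≤ 2 ∧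
      ∀ z, u z = 1 - (2 * α : ℂ)⁻¹ * ∫ s, jostKernel α (z - s) • (V s * u s) := by
  have hhalf : ‖-(2 * α : ℂ)⁻¹ • jostOperator hα.le hV‖ ≤ 1 / 2 := by
    have hnorm : ‖-(2 * α : ℂ)⁻¹‖ = (2 * α)⁻¹ := by simp [abs_of_pos hα]
    rw [norm_smul, hnorm, inv_mul_le_iff₀ (by positivity)]
    linarith [norm_jostOperator_le hα.le hV]
  obtain ⟨u, hu⟩ := exists_eq_add_apply_of_norm_lt_one (-(2 * α : ℂ)⁻¹ • jostOperator hα.le hV)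
    (hhalf.trans_lt (by norm_num)) 1
  refine ⟨u, ?_, fun z => ?_⟩
  · have h := norm_add_le 1 ((-(2 * α : ℂ)⁻¹ • jostOperator hα.le hV) u)
    rw [← hu, norm_one] at h
    linarith [ContinuousLinearMap.le_of_opNorm_le _ hhalf u]
  · rw [← jostOperator_apply hα.le hV u z, sub_eq_add_neg, ← neg_mul]
    exact congrArg (fun v : ℝ →ᵇ ℂ => v z) hu

theorem hasDerivAt_integral_Iic {E : Type*} [NormedAddCommGroup E] [NormedSpace ℝ E]
    [CompleteSpace E] {f : ℝ → E} (hf : Continuous f) (hint : ∀ z, IntegrableOn f (Iic z)) (z : ℝ) :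
    HasDerivAt (fun z => ∫ s in Iic z, f s) (f z) z := by
  have hsplit : ∀ t, ∫ s in Iic t, f s = (∫ s in Iic z, f s) + ∫ s in z..t, f s := fun t => by
    rw [← intervalIntegral.integral_Iic_sub_Iic (hint z) (hint t), add_sub_cancel]
  exact ((hf.integral_hasStrictDerivAt z z).hasDerivAt.const_add _).congr_of_eventuallyEq
    (Eventually.of_forall hsplit)

/-- The solution `∫_{-∞}^z e^{-2α(z-s)} q(s) ds` of `p' + 2αp = q`, written so that `z` enters the
integral only through its domain. -/
def relaxation (α : ℝ) (q : ℝ → ℂ) (z : ℝ) : ℂ :=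
  Real.exp (-(2 * α) * z) • ∫ s in Iic z, Real.exp (2 * α * s) • q s

theorem integrableOn_Iic_exp_smul (hα : 0 ≤ α) {q : ℝ → ℂ} (hq : Integrable q) (z : ℝ) :
    IntegrableOn (fun s => Real.exp (2 * α * s) • q s) (Iic z) := by
  have hexp : Continuous fun s => Real.exp (2 * α * s) := by fun_prop
  refine hq.integrableOn.bdd_smul (Real.exp (2 * α * z)) hexp.aestronglyMeasurable ?_
  filter_upwards [ae_restrict_mem measurableSet_Iic] with s hs
  rw [Real.norm_of_nonneg (Real.exp_pos _).le]
  gcongr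
  exact hs

theorem hasDerivAt_relaxation (hα : 0 ≤ α) {q : ℝ → ℂ} (hqc : Continuous q) (hq : Integrable q)
    (z : ℝ) : HasDerivAt (relaxation α q) (q z - 2 * α * relaxation α q z) z := by
  have hexp : HasDerivAt (fun z => Real.exp (-(2 * α) * z))
      (Real.exp (-(2 * α) * z) * -(2 * α)) z := by
    simpa using ((hasDerivAt_id z).const_mul (-(2 * α))).exp
  have hcont : Continuous fun s => Real.exp (2 * α * s) • q s := by fun_prop
  have h := hexp.smul (hasDerivAt_integral_Iic hcont (integrableOn_Iic_exp_smul hα hq) z)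
  refine h.congr_deriv ?_
  rw [smul_smul, ← Real.exp_add, show -(2 * α) * z + 2 * α * z = 0 by ring, Real.exp_zero,
    one_smul, relaxation]
  simp only [Complex.real_smul, Complex.ofReal_mul, Complex.ofReal_neg, Complex.ofReal_ofNat]
  ring

theorem integral_jostKernel_smul (hα : 0 ≤ α) {q : ℝ → ℂ} (hq : Integrable q) (z : ℝ) :
    ∫ s, jostKernel α (z - s) • q s = relaxation α q z + ((∫ s, q s) - ∫ s in Iic z, q s) := by
  have hint := integrable_jostKernel_smul hα hq z
  have hleft : ∫ s in Iic z, jostKernel α (z - s) • q s = relaxation α q z := by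
    rw [relaxation, ← integral_smul]
    refine setIntegral_congr_fun measurableSet_Iic fun s hs => ?_
    have hs' : 0 ≤ z - s := sub_nonneg.2 hs
    simp only [jostKernel, max_eq_left hs', smul_smul, ← Real.exp_add]
    ring_nf
  have hright : ∫ s in Ioi z, jostKernel α (z - s) • q s = ∫ s in Ioi z, q s := by
    refine setIntegral_congr_fun measurableSet_Ioi fun s hs => ?_
    have hs' : z - s ≤ 0 := (sub_neg.2 hs).le
    simp [jostKernel, max_eq_right hs']
  rw [← intervalIntegral.integral_Iic_add_Ioi hint.integrableOn hint.integrableOn, hleft, hright,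
    ← intervalIntegral.integral_Iic_add_Ioi (b := z) hq.integrableOn hq.integrableOn,
    add_sub_cancel_left]

theorem hasDerivAt_integral_jostKernel (hα : 0 ≤ α) {q : ℝ → ℂ} (hqc : Continuous q)
    (hq : Integrable q) (z : ℝ) :
    HasDerivAt (fun z => ∫ s, jostKernel α (z - s) • q s) (-(2 * α) * relaxation α q z) z := by
  rw [funext (integral_jostKernel_smul hα hq)]
  have h := (hasDerivAt_relaxation hα hqc hq z).add
    ((hasDerivAt_integral_Iic hqc (fun _ => hq.integrableOn) z).const_sub (∫ s, q s))
  exact h.congr_deriv (by ring)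

theorem isIntegralCurve_of_eq_one_sub_integral_jostKernel (hα : 0 < α) (hVc : Continuous V)
    (hV : Integrable V) {u : ℝ →ᵇ ℂ}
    (hu : ∀ z, u z = 1 - (2 * α : ℂ)⁻¹ * ∫ s, jostKernel α (z - s) • (V s * u s)) :
    IsIntegralCurve (fun z => (u z, relaxation α (fun s => V s * u s) z))
      fun t => jostGenerator α V t := by
  have hqc : Continuous fun s => V s * u s := hVc.mul u.continuous
  have hq := integrable_mul_boundedContinuous hV u
  have hα' : (α : ℂ) ≠ 0 := Complex.ofReal_ne_zero.2 hα.ne'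
  refine isIntegralCurve_jostGenerator_iff.2 ⟨fun z => ?_, hasDerivAt_relaxation hα.le hqc hq⟩
  have h := ((hasDerivAt_integral_jostKernel hα.le hqc hq z).const_mul (2 * α : ℂ)⁻¹).const_sub 1
  refine (h.congr_of_eventuallyEq (Eventually.of_forall hu)).congr_deriv ?_
  field_simp

theorem memX_integral_smul {κ : ℝ → ℝ → ℝ} {q : ℝ → ℂ}
    (hκ : ∀ z ≥ 0, ∀ s, |κ z s| ≤ Real.exp (-η * z) * Real.exp (η * |s|))
    (hq : Integrable fun s => Real.exp (η * |s|) * ‖q s‖) :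
    memX η fun z => ∫ s, κ z s • q s := by
  refine ⟨∫ s, Real.exp (η * |s|) * ‖q s‖, fun z hz => ?_⟩
  have hbound : ‖∫ s, κ z s • q s‖ ≤
      Real.exp (-η * z) * ∫ s, Real.exp (η * |s|) * ‖q s‖ := by
    rw [← integral_const_mul]
    refine norm_integral_le_of_norm_le (hq.const_mul _) (Eventually.of_forall fun s => ?_)
    rw [norm_smul, Real.norm_eq_abs, ← mul_assoc]
    gcongr
    exact hκ z hz s
  calc ‖∫ s, κ z s • q s‖ * Real.exp (η * z)
      ≤ Real.exp (-η * z) * (∫ s, Real.exp (η * |s|) * ‖q s‖) * Real.exp (η * z) := by gcongr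
    _ = ∫ s, Real.exp (η * |s|) * ‖q s‖ := by
      rw [mul_right_comm, ← Real.exp_add]
      simp

theorem memX.const_mul {ω : ℝ → ℂ} (hω : memX η ω) (a : ℂ) : memX η fun z => a * ω z := by
  obtain ⟨C, hC⟩ := hω
  refine ⟨‖a‖ * C, fun z hz => ?_⟩
  rw [norm_mul, mul_assoc]
  gcongr
  exact hC z hz

theorem memX_integral_jostKernel (hη : 0 ≤ η) (hηα : η ≤ 2 * α) {q : ℝ → ℂ}
    (hq : Integrable fun s => Real.exp (η * |s|) * ‖q s‖) :
    memX η fun z => ∫ s, jostKernel α (z - s) • q s := by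
  refine memX_integral_smul (fun z _ s => ?_) hq
  rw [abs_of_pos (jostKernel_pos α _), ← Real.exp_add]
  refine (jostKernel_le_exp hη hηα _).trans (Real.exp_le_exp.2 ?_)
  nlinarith [le_abs_self s]

theorem memX_integral_one_sub_jostKernel (hα : 0 ≤ α) (hη : 0 ≤ η) {q : ℝ → ℂ}
    (hq : Integrable fun s => Real.exp (η * |s|) * ‖q s‖) :
    memX η fun z => ∫ s, (1 - jostKernel α (-z - s)) • q s := by
  refine memX_integral_smul (fun z _ s => ?_) hq
  rw [abs_of_nonneg (sub_nonneg.2 (jostKernel_le_one hα _)), ← Real.exp_add]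
  refine (one_sub_jostKernel_le_exp hη _).trans (Real.exp_le_exp.2 ?_)
  nlinarith [neg_abs_le s]

theorem one_sub_integral_mul_ne_zero (hα : 0 < α) (hV : Integrable V) (hVα : ∫ s, ‖V s‖ < α)
    {u : ℝ →ᵇ ℂ} (hu : ‖u‖ ≤ 2) : 1 - (2 * α : ℂ)⁻¹ * ∫ s, V s * u s ≠ 0 := by
  have hint : ‖∫ s, V s * u s‖ ≤ (∫ s, ‖V s‖) * ‖u‖ := by
    simpa using norm_integral_mul_boundedContinuous_le (κ := fun _ => 1) (by simp) hV u
  have hlt : ‖(2 * α : ℂ)⁻¹ * ∫ s, V s * u s‖ < 1 := by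
    have hnorm : ‖(2 * α : ℂ)⁻¹‖ = (2 * α)⁻¹ := by simp [abs_of_pos hα]
    rw [norm_mul, hnorm, inv_mul_lt_iff₀ (by positivity), mul_one]
    have : 0 ≤ ∫ s, ‖V s‖ := by positivity
    nlinarith
  intro h
  rw [← sub_eq_zero.1 h, norm_one] at hlt
  exact lt_irrefl _ hlt

theorem exists_isIntegralCurve_jostGenerator (hα : 0 < α) (hη : 0 ≤ η) (hηα : η ≤ 2 * α)
    (hVc : Continuous V) (hVη : Integrable fun s => Real.exp (η * |s|) * ‖V s‖)
    (hVα : ∫ s, ‖V s‖ < α) :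
    ∃ x, IsIntegralCurve x (fun t => jostGenerator α V t) ∧ memX η (fun z => (x z).1 - 1) ∧
      ∃ l ≠ 0, memX η fun z => (x (-z)).1 - l := by
  have hV : Integrable V := by
    refine hVη.mono' hVc.aestronglyMeasurable (Eventually.of_forall fun s => ?_)
    exact le_mul_of_one_le_left (norm_nonneg _) (Real.one_le_exp (by positivity))
  obtain ⟨u, hu2, hu⟩ := exists_eq_one_sub_integral_jostKernel hα hV hVα
  have hqi : Integrable fun s => V s * u s := integrable_mul_boundedContinuous hV u
  have hqη : Integrable fun s => Real.exp (η * |s|) * ‖V s * u s‖ := by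
    refine (hVη.mul_const ‖u‖).mono' (Continuous.aestronglyMeasurable (by fun_prop))
      (Eventually.of_forall fun s => ?_)
    rw [norm_mul, norm_norm, norm_mul, mul_assoc, Real.norm_of_nonneg (Real.exp_pos _).le]
    gcongr
    exact u.norm_coe_le_norm s
  refine ⟨_, isIntegralCurve_of_eq_one_sub_integral_jostKernel hα hVc hV hu, ?_,
    _, one_sub_integral_mul_ne_zero hα hV hVα hu2, ?_⟩
  · convert (memX_integral_jostKernel hη hηα hqη).const_mul (-(2 * α : ℂ)⁻¹) using 2 with z
    simp only [hu z]
    ring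
  · convert (memX_integral_one_sub_jostKernel hα.le hη hqη).const_mul (2 * α : ℂ)⁻¹ using 2 with z
    simp only [hu (-z), sub_smul, one_smul]
    rw [integral_sub hqi (integrable_jostKernel_smul hα.le hqi _)]
    ring

theorem integrable_exp_neg_mul_abs {a : ℝ} (ha : 0 < a) :
    Integrable fun s : ℝ => Real.exp (-a * |s|) := by
  rw [← integrableOn_univ, ← Iic_union_Ioi (a := (0 : ℝ))]
  refine IntegrableOn.union ?_ ?_
  · refine (integrableOn_exp_mul_Iic ha 0).congr_fun (fun s hs => ?_) measurableSet_Iic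
    simp [abs_of_nonpos (mem_Iic.1 hs)]
  · refine (integrableOn_exp_mul_Ioi (neg_neg_of_pos ha) 0).congr_fun (fun s hs => ?_)
      measurableSet_Ioi
    simp [abs_of_pos (mem_Ioi.1 hs)]

theorem integrable_exp_mul_norm_of_norm_le {K η₀ : ℝ} {W : ℝ → ℂ} (hWc : Continuous W)
    (hW : ∀ s, ‖W s‖ ≤ K * Real.exp (-η₀ * |s|)) (hη : η < η₀) :
    Integrable fun s => Real.exp (η * |s|) * ‖W s‖ := by
  refine ((integrable_exp_neg_mul_abs (sub_pos.2 hη)).const_mul K).mono'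
    (Continuous.aestronglyMeasurable (by fun_prop)) (Eventually.of_forall fun s => ?_)
  rw [norm_mul, norm_norm, Real.norm_of_nonneg (Real.exp_pos _).le]
  calc Real.exp (η * |s|) * ‖W s‖
      ≤ Real.exp (η * |s|) * (K * Real.exp (-η₀ * |s|)) := by gcongr; exact hW s
    _ = K * Real.exp (-(η₀ - η) * |s|) := by
      rw [mul_left_comm, ← Real.exp_add]
      ring_nf

theorem norm_comp_add_abs_le {K η₀ : ℝ} (hV : ∀ s ≥ 0, ‖V s‖ ≤ K * Real.exp (-η₀ * s)) {M : ℝ}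
    (hM : 0 ≤ M) (s : ℝ) :
    ‖V (M + |s|)‖ ≤ K * Real.exp (-η₀ * M) * Real.exp (-η₀ * |s|) := by
  refine (hV _ (by positivity)).trans_eq ?_
  rw [mul_assoc, ← Real.exp_add, mul_add]

theorem exists_integral_norm_comp_add_abs_lt {K η₀ : ℝ} (hη₀ : 0 < η₀)
    (hV : ∀ s ≥ 0, ‖V s‖ ≤ K * Real.exp (-η₀ * s)) (hα : 0 < α) :
    ∃ M ≥ 0, ∫ s, ‖V (M + |s|)‖ < α := by
  set I := ∫ s : ℝ, Real.exp (-η₀ * |s|)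
  have hlim : Tendsto (fun M => K * Real.exp (-η₀ * M) * I) atTop (nhds 0) := by
    have hexp := Real.tendsto_exp_atBot.comp
      (tendsto_id.const_mul_atTop_of_neg (neg_neg_of_pos hη₀))
    simpa using (hexp.const_mul K).mul_const I
  obtain ⟨M, hMα, hM⟩ := ((hlim.eventually (gt_mem_nhds hα)).and (eventually_ge_atTop 0)).exists
  refine ⟨M, hM, lt_of_le_of_lt ?_ hMα⟩
  rw [← integral_const_mul]
  exact integral_mono_of_nonneg (Eventually.of_forall fun _ => norm_nonneg _)
    ((integrable_exp_neg_mul_abs hη₀).const_mul _)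
    (Eventually.of_forall (norm_comp_add_abs_le hV hM))

theorem memX_of_memX_comp_add {M : ℝ} {ω : ℝ → ℂ} (hωc : Continuous ω)
    (hω : memX η fun z => ω (M + z)) : memX η ω := by
  obtain ⟨C, hC⟩ := hω
  have hcont : Continuous fun z => ‖ω z‖ * Real.exp (η * z) := by fun_prop
  obtain ⟨B, hB⟩ := isCompact_Icc.exists_bound_of_continuousOn (s := Icc 0 M) hcont.continuousOn
  refine ⟨max B (C * Real.exp (η * M)), fun z hz => ?_⟩
  rcases le_total z M with hzM | hMz
  · exact le_max_of_le_left ((le_abs_self _).trans (hB z ⟨hz, hzM⟩))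
  · refine le_max_of_le_right ?_
    have h := hC (z - M) (sub_nonneg.2 hMz)
    simp only [add_sub_cancel] at h
    calc ‖ω z‖ * Real.exp (η * z)
        = ‖ω z‖ * Real.exp (η * (z - M)) * Real.exp (η * M) := by
          rw [mul_assoc, ← Real.exp_add]
          ring_nf
      _ ≤ C * Real.exp (η * M) := by gcongr

theorem exists_isIntegralCurve_memX_of_comp_add {σ M : ℝ} {W : ℝ → ℂ} (hVc : Continuous V)
    (hVW : ∀ z ≥ 0, V (M + z) = W z) {y : ℝ → ℂ × ℂ}
    (hy : IsIntegralCurve y fun t => jostGenerator σ W t) (hyη : memX η fun z => (y z).1 - 1) :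
    ∃ x, IsIntegralCurve x (fun t => jostGenerator σ V t) ∧ memX η fun z => (x z).1 - 1 := by
  have hshift : ∀ t ≥ M, HasDerivAt (fun t => y (t - M)) (jostGenerator σ V t (y (t - M))) t := by
    intro t ht
    refine ((hy (t - M)).comp_sub_const t M).congr_deriv ?_
    simp [← hVW (t - M) (sub_nonneg.2 ht)]
  obtain ⟨x, hx, hxy⟩ := exists_isIntegralCurve_extension (continuous_jostGenerator σ hVc) hshift
  refine ⟨x, hx, memX_of_memX_comp_add (M := M) (by have := hx.continuous; fun_prop) ?_⟩
  obtain ⟨C, hC⟩ := hyη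
  refine ⟨C, fun z hz => ?_⟩
  have hxz : x (M + z) = y z := by simpa using hxy (mem_Ici.2 (le_add_of_nonneg_right hz))
  simpa only [hxz] using hC z hz

theorem isIntegralCurve_jostGenerator_comp_neg {σ : ℝ} {W : ℝ → ℂ} (hW : ∀ t, W (-t) = W t)
    {y : ℝ → ℂ × ℂ} (hy : IsIntegralCurve y fun t => jostGenerator σ W t) (a : ℂ) :
    IsIntegralCurve (fun z => (a * (y (-z)).1, -(a * (y (-z)).2)))
      fun t => jostGenerator (-σ) W t := by
  rw [isIntegralCurve_jostGenerator_iff] at hy ⊢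
  refine ⟨fun z => ?_, fun z => ?_⟩
  · exact (((hy.1 (-z)).scomp z (hasDerivAt_neg z)).const_mul a).congr_deriv (by simp)
  · refine (((hy.2 (-z)).scomp z (hasDerivAt_neg z)).const_mul a).neg.congr_deriv ?_
    simp only [hW, neg_smul, one_smul, Complex.ofReal_neg]
    ring

theorem exists_jost_solutions {K η₀ : ℝ} (hα : 0 < α) (hη : 0 ≤ η) (hηα : η ≤ 2 * α)
    (hηη₀ : η < η₀) (hVc : Continuous V) (hV : ∀ s ≥ 0, ‖V s‖ ≤ K * Real.exp (-η₀ * s)) :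
    (∃ x, IsIntegralCurve x (fun t => jostGenerator α V t) ∧ memX η fun z => (x z).1 - 1) ∧
    ∃ x, IsIntegralCurve x (fun t => jostGenerator (-α) V t) ∧ memX η fun z => (x z).1 - 1 := by
  obtain ⟨M, hM, hMα⟩ := exists_integral_norm_comp_add_abs_lt (hη.trans_lt hηη₀) hV hα
  have hVW : ∀ z ≥ 0, V (M + z) = V (M + |z|) := fun z hz => by rw [abs_of_nonneg hz]
  have hWc : Continuous fun z => V (M + |z|) := by fun_prop
  obtain ⟨y, hy, hy₁, l, hl, hyl⟩ := exists_isIntegralCurve_jostGenerator hα hη hηα hWc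
    (integrable_exp_mul_norm_of_norm_le hWc (norm_comp_add_abs_le hV hM) hηη₀) hMα
  refine ⟨exists_isIntegralCurve_memX_of_comp_add hVc hVW hy hy₁,
    exists_isIntegralCurve_memX_of_comp_add hVc hVW
      (isIntegralCurve_jostGenerator_comp_neg (fun t => by rw [abs_neg]) hy l⁻¹) ?_⟩
  convert hyl.const_mul l⁻¹ using 2 with z
  rw [mul_sub, inv_mul_cancel₀ hl]

end Jost

theorem wnorm_le {η C : ℝ} {ω : ℝ → ℂ}
    (hC : ∀ z ≥ (0 : ℝ), ‖ω z‖ * Real.exp (η * z) ≤ C) : wnorm η ω ≤ C :=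
  csSup_le (nonempty_Ici.image _) (forall_mem_image.2 hC)

theorem memX.tendsto_zero {η : ℝ} (hη : 0 < η) {ω : ℝ → ℂ} (hω : memX η ω) :
    Tendsto ω atTop (nhds 0) := by
  obtain ⟨C, hC⟩ := hω
  have hexp := Real.tendsto_exp_atBot.comp (tendsto_id.const_mul_atTop_of_neg (neg_neg_of_pos hη))
  refine squeeze_zero_norm' ?_ (by simpa using hexp.const_mul C)
  filter_upwards [eventually_ge_atTop 0] with z hz
  have h := mul_le_mul_of_nonneg_right (hC z hz) (Real.exp_pos (-η * z)).le
  rw [mul_assoc, ← Real.exp_add] at h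
  simpa using h

theorem hasDerivAt_cexp_ofReal_mul (σ z : ℝ) :
    HasDerivAt (fun y : ℝ => Complex.exp ↑(σ * y)) (Complex.exp ↑(σ * z) * σ) z := by
  simpa using ((hasDerivAt_id z).const_mul σ).ofReal_comp.cexp

theorem lapA_cexp_mul_of_isIntegralCurve {α σ : ℝ} (hσ : σ ^ 2 = α ^ 2) {V : ℝ → ℂ}
    {x : ℝ → ℂ × ℂ} (hx : IsIntegralCurve x fun t => jostGenerator σ V t) (z : ℝ) :
    lapA α (fun y => Complex.exp ↑(σ * y) * (x y).1) z =
      V z * (Complex.exp ↑(σ * z) * (x z).1) := by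
  obtain ⟨hv, hv'⟩ := isIntegralCurve_jostGenerator_iff.1 hx
  have hderiv : deriv (fun y => Complex.exp ↑(σ * y) * (x y).1) =
      fun y => Complex.exp ↑(σ * y) * (σ * (x y).1 + (x y).2) := by
    funext y
    rw [((hasDerivAt_cexp_ofReal_mul σ y).fun_mul (hv y)).deriv]
    ring
  have hderiv₂ := (hasDerivAt_cexp_ofReal_mul σ z).fun_mul
    (((hv z).const_mul (σ : ℂ)).fun_add (hv' z))
  have hσ' : (σ : ℂ) ^ 2 = (α : ℂ) ^ 2 := by exact_mod_cast hσ
  rw [lapA, hderiv, ← hσ', hderiv₂.deriv]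
  ring

namespace BLProfile

variable (P : BLProfile)

theorem continuous_ddU : Continuous P.ddU := by
  have h := (contDiff_infty.1 P.smooth 2).continuous_iteratedDeriv 2 le_rfl
  rwa [iteratedDeriv_succ, iteratedDeriv_one] at h

theorem exists_abs_ddU_le :
    ∃ C, 0 < C ∧ ∀ z ≥ (0 : ℝ), |P.ddU z| ≤ C * Real.exp (-P.eta0 * z) := by
  obtain ⟨C, hC, h⟩ := P.decay 2
  refine ⟨C, hC, fun z hz => ?_⟩
  have hz := h z hz
  rwa [iteratedDeriv_succ, iteratedDeriv_one, show deriv (fun y => P.U y - P.Uplus) = deriv P.U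
    from funext fun y => deriv_sub_const _] at hz

variable {P} {c : ℂ}

theorem dc_le_norm_sub {z : ℝ} (hz : 0 ≤ z) : P.dc c ≤ ‖(P.U z : ℂ) - c‖ := by
  rw [← dist_eq_norm, dist_comm]
  exact Metric.infDist_le_dist_of_mem (mem_image_of_mem _ hz)

theorem sub_ne_zero_of_dc_pos (hc : 0 < P.dc c) {z : ℝ} (hz : 0 ≤ z) : (P.U z : ℂ) - c ≠ 0 :=
  norm_pos_iff.1 (hc.trans_le (dc_le_norm_sub hz))

variable (P c) in
/-- The potential `V = U''/(U - c)` of the Rayleigh equation `φ'' = (α² + V)φ`, extended evenly to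
`z < 0`, where `U - c` may vanish. -/
def rayleighPotential (z : ℝ) : ℂ := P.ddU |z| / (P.U |z| - c)

theorem continuous_rayleighPotential (hc : 0 < P.dc c) : Continuous (P.rayleighPotential c) := by
  have hU := P.smooth.continuous
  have hddU := P.continuous_ddU
  exact Continuous.div (by fun_prop) (by fun_prop) fun z =>
    sub_ne_zero_of_dc_pos hc (abs_nonneg z)

theorem exists_norm_rayleighPotential_le (hc : 0 < P.dc c) :
    ∃ K, ∀ z ≥ 0, ‖P.rayleighPotential c z‖ ≤ K * Real.exp (-P.eta0 * z) := by
  obtain ⟨C, hC, h⟩ := P.exists_abs_ddU_le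
  refine ⟨C / P.dc c, fun z hz => ?_⟩
  rw [rayleighPotential, abs_of_nonneg hz, norm_div, Complex.norm_real, Real.norm_eq_abs,
    div_mul_eq_mul_div]
  gcongr
  · exact h z hz
  · exact dc_le_norm_sub hz

theorem Ray_cexp_mul_eq_zero (hc : 0 < P.dc c) {α σ : ℝ} (hσ : σ ^ 2 = α ^ 2) {x : ℝ → ℂ × ℂ}
    (hx : IsIntegralCurve x fun t => jostGenerator σ (P.rayleighPotential c) t) {z : ℝ}
    (hz : 0 ≤ z) : P.Ray α c (fun y => Complex.exp ↑(σ * y) * (x y).1) z = 0 := by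
  have hV : ((P.U z : ℂ) - c) * P.rayleighPotential c z = P.ddU z := by
    rw [rayleighPotential, abs_of_nonneg hz, mul_div_cancel₀ _ (sub_ne_zero_of_dc_pos hc hz)]
  rw [Ray, lapA_cexp_mul_of_isIntegralCurve hσ hx, ← mul_assoc, hV, sub_self]

theorem Admissible.dc_pos {ε₀ α : ℝ} (h : P.Admissible ε₀ α c) (hε₀ : 0 < ε₀) (hα : 0 < α) :
    0 < P.dc c :=
  (by positivity : 0 < ε₀ / (1 + α)).trans_le h

end BLProfile

theorem eq_zero_of_exp_add_exp_neg_eq_zero {α : ℝ} (hα : 0 < α) {v w : ℝ → ℂ} {l m : ℂ}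
    (hl : l ≠ 0) (hm : m ≠ 0) (hv : Tendsto v atTop (nhds l)) (hw : Tendsto w atTop (nhds m))
    {a b : ℂ} (hab : ∀ z ≥ (0 : ℝ),
      a * (Complex.exp ↑(α * z) * v z) + b * (Complex.exp (-↑(α * z)) * w z) = 0) :
    a = 0 ∧ b = 0 := by
  have hcancel : ∀ z : ℝ, Complex.exp (-↑(α * z)) * Complex.exp ↑(α * z) = 1 := fun z => by
    rw [← Complex.exp_add, neg_add_cancel, Complex.exp_zero]
  have hdecay : Tendsto (fun z : ℝ => Complex.exp (-↑(α * z))) atTop (nhds 0) := by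
    have h := (Complex.continuous_ofReal.tendsto 0).comp
      (Real.tendsto_exp_neg_atTop_nhds_zero.comp (tendsto_id.const_mul_atTop hα))
    simpa [Function.comp_def] using h
  have ha : a = 0 := by
    have hlim : Tendsto (fun z : ℝ => a * v z +
        b * (Complex.exp (-↑(α * z)) * Complex.exp (-↑(α * z)) * w z)) atTop (nhds (a * l)) := by
      simpa using (hv.const_mul a).add (((hdecay.mul hdecay).mul hw).const_mul b)
    have hzero : ∀ᶠ z in atTop, a * v z +
        b * (Complex.exp (-↑(α * z)) * Complex.exp (-↑(α * z)) * w z) = 0 := by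
      filter_upwards [eventually_ge_atTop 0] with z hz
      linear_combination Complex.exp (-↑(α * z)) * hab z hz - a * v z * hcancel z
    exact (mul_eq_zero.1 (tendsto_nhds_unique_of_eventuallyEq hlim tendsto_const_nhds hzero)
      ).resolve_right hl
  have hzero : ∀ᶠ z in atTop, b * w z = 0 := by
    filter_upwards [eventually_ge_atTop 0] with z hz
    have h := hab z hz
    rw [ha] at h
    linear_combination Complex.exp ↑(α * z) * h - b * w z * hcancel z
  exact ⟨ha, (mul_eq_zero.1 (tendsto_nhds_unique_of_eventuallyEq (hw.const_mul b)
    tendsto_const_nhds hzero)).resolve_right hm⟩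

/-- **Lemma 3.2: slow Rayleigh solutions.** For admissible `(α,c)` there exist two
linearly independent solutions `φ_{α,±}(z) = e^{±αz}(1 + ψ_{α,±}(z))` of the
homogeneous Rayleigh equation, with `ψ_{α,±} ∈ X^η` and `‖ψ_{α,±}‖_η ≤ C`, for some
`0 < η < min{α, η₀}`. -/
theorem rayleigh_homogeneous_solutions (P : BLProfile) (ε₀ : ℝ) (hε₀ : 0 < ε₀)
    (α : ℝ) (hα : 0 < α) (c : ℂ) (hadm : P.Admissible ε₀ α c) :
    ∃ η : ℝ, 0 < η ∧ η < min α P.eta0 ∧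
      ∃ C > (0:ℝ), ∃ ψp ψm : ℝ → ℂ,
        memX η ψp ∧ memX η ψm ∧ wnorm η ψp ≤ C ∧ wnorm η ψm ≤ C ∧
        (∀ z ≥ (0:ℝ),
          P.Ray α c (fun y => Complex.exp (↑(α * y)) * (1 + ψp y)) z = 0) ∧
        (∀ z ≥ (0:ℝ),
          P.Ray α c (fun y => Complex.exp (-↑(α * y)) * (1 + ψm y)) z = 0) ∧
        (∀ a b : ℂ,
          (∀ z ≥ (0:ℝ),
            a * (Complex.exp (↑(α * z)) * (1 + ψp z))
              + b * (Complex.exp (-↑(α * z)) * (1 + ψm z)) = 0) →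
          a = 0 ∧ b = 0) := by
  have hc : 0 < P.dc c := hadm.dc_pos hε₀ hα
  have hmin : 0 < min α P.eta0 := lt_min hα P.eta0_pos
  have hη := half_lt_self hmin
  obtain ⟨K, hK⟩ := P.exists_norm_rayleighPotential_le hc
  obtain ⟨⟨x, hx, hx₁⟩, y, hy, hy₁⟩ := exists_jost_solutions hα (half_pos hmin).le
    (by linarith [min_le_left α P.eta0]) (hη.trans_le (min_le_right _ _))
    (P.continuous_rayleighPotential hc) hK
  obtain ⟨Cx, hCx⟩ := hx₁
  obtain ⟨Cy, hCy⟩ := hy₁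
  refine ⟨min α P.eta0 / 2, half_pos hmin, hη, max 1 (max Cx Cy), by positivity,
    fun z => (x z).1 - 1, fun z => (y z).1 - 1, ⟨Cx, hCx⟩, ⟨Cy, hCy⟩,
    (wnorm_le hCx).trans (by simp), (wnorm_le hCy).trans (by simp),
    fun z hz => ?_, fun z hz => ?_, fun a b hab => ?_⟩
  · simpa using BLProfile.Ray_cexp_mul_eq_zero hc rfl hx hz
  · simpa using BLProfile.Ray_cexp_mul_eq_zero hc (neg_sq α) hy hz
  · have htendsto : ∀ {ω : ℝ → ℂ}, memX (min α P.eta0 / 2) ω →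
        Tendsto (fun z => 1 + ω z) atTop (nhds 1) := fun hω => by
      simpa using (hω.tendsto_zero (half_pos hmin)).const_add 1
    exact eq_zero_of_exp_add_exp_neg_eq_zero hα one_ne_zero one_ne_zero (htendsto ⟨Cx, hCx⟩)
      (htendsto ⟨Cy, hCy⟩) hab

end
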